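/- If I and J are *-homogeneous ideals of D with M(I) = M(J) (i.e., I and J are similar), then (IJ)* is a *-homogeneous ideal with M((IJ)*) = M(I) = M(J). -/

import Mathlib

open scoped nonZeroDivisors

/-- A star operation on the nonzero fractional ideals of an integral domain `D`
with quotient field `K`: it fixes nonzero principal fractional ideals, commutes with
multiplication by nonzero principal fractional ideals, is extensive, monotone and
idempotent (on nonzero fractional ideals). -/
structure StarOperation (D K : Type*) [CommRing D] [IsDomain D] [Field K]
    [Algebra D K] [IsFractionRing D K] where
  star : FractionalIdeal D⁰ K → FractionalIdeal D⁰ K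
  star_spanSingleton : ∀ x : K, x ≠ 0 →
    star (FractionalIdeal.spanSingleton D⁰ x) = FractionalIdeal.spanSingleton D⁰ x
  star_smul : ∀ (x : K) (I : FractionalIdeal D⁰ K), x ≠ 0 → I ≠ 0 →
    star (FractionalIdeal.spanSingleton D⁰ x * I) = FractionalIdeal.spanSingleton D⁰ x * star I
  le_star : ∀ I : FractionalIdeal D⁰ K, I ≠ 0 → I ≤ star I
  star_mono : ∀ I J : FractionalIdeal D⁰ K, I ≠ 0 → J ≠ 0 → I ≤ J → star I ≤ star J
  star_idem : ∀ I : FractionalIdeal D⁰ K, I ≠ 0 → star (star I) = star I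

namespace StarOperation

variable {D K : Type*} [CommRing D] [IsDomain D] [Field K] [Algebra D K] [IsFractionRing D K]
variable (s : StarOperation D K)

/-- `*` has finite character: for every nonzero fractional ideal `I`, `I^*` is the union
of `J^*` over the nonzero finitely generated fractional subideals `J` of `I`. -/
def FiniteCharacter : Prop :=
  ∀ I : FractionalIdeal D⁰ K, I ≠ 0 → ∀ x ∈ s.star I,
    ∃ J : FractionalIdeal D⁰ K, J ≠ 0 ∧ (J : Submodule D K).FG ∧ J ≤ I ∧ x ∈ s.star J

/-- A (nonzero) integral ideal `I` of `D` is a `*`-ideal if `I^* = I`. -/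
def IsStarIdeal (I : Ideal D) : Prop :=
  I ≠ ⊥ ∧ s.star (I : FractionalIdeal D⁰ K) = (I : FractionalIdeal D⁰ K)

/-- An integral ideal `I` of `D` is a `*`-ideal of finite type if `I = J^*` for some
nonzero finitely generated ideal `J`. -/
def IsFiniteTypeStarIdeal (I : Ideal D) : Prop :=
  ∃ J : Ideal D, J ≠ ⊥ ∧ J.FG ∧
    s.star (J : FractionalIdeal D⁰ K) = (I : FractionalIdeal D⁰ K)

/-- A maximal `*`-ideal: maximal among proper integral `*`-ideals. -/
def IsMaxStarIdeal (M : Ideal D) : Prop :=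
  M ≠ ⊤ ∧ s.IsStarIdeal M ∧ ∀ J : Ideal D, J ≠ ⊤ → s.IsStarIdeal J → M ≤ J → J = M

/-- `I` is `*`-homogeneous: a proper `*`-ideal of finite type such that `(J + J')^* ≠ D`
for every pair `J`, `J'` of proper `*`-ideals of finite type containing `I`. -/
def IsHomog (I : Ideal D) : Prop :=
  I ≠ ⊤ ∧ s.IsStarIdeal I ∧ s.IsFiniteTypeStarIdeal I ∧
    ∀ J J' : Ideal D, J ≠ ⊤ → J' ≠ ⊤ → s.IsStarIdeal J → s.IsStarIdeal J' →
      s.IsFiniteTypeStarIdeal J → s.IsFiniteTypeStarIdeal J' → I ≤ J → I ≤ J' →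
      s.star ((J + J' : Ideal D) : FractionalIdeal D⁰ K) ≠ 1

/-- The set `M(I) = {x ∈ D : (xD + I)^* ≠ D}` attached to an ideal `I`. -/
def MSet (I : Ideal D) : Set D :=
  {x : D | s.star ((Ideal.span {x} + I : Ideal D) : FractionalIdeal D⁰ K) ≠ 1}

/-- `A` and `B` are `*`-comaximal if `(A + B)^* = D`. -/
def StarComaximal (A B : Ideal D) : Prop :=
  s.star ((A + B : Ideal D) : FractionalIdeal D⁰ K) = 1

/-- An integral ideal `I` is `*`-invertible if `(I · I⁻¹)^* = D`. -/
def StarInvertible (I : Ideal D) : Prop :=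
  s.star ((I : FractionalIdeal D⁰ K) * (I : FractionalIdeal D⁰ K)⁻¹) = 1

/-- `D` is a `*`-SH domain: every principal ideal generated by a nonzero nonunit is a
`*`-product of finitely many `*`-homogeneous ideals. -/
def IsSHDomain : Prop :=
  ∀ x : D, x ≠ 0 → ¬IsUnit x →
    ∃ T : Multiset (Ideal D), (∀ J ∈ T, s.IsHomog J) ∧
      s.star ((T.prod : Ideal D) : FractionalIdeal D⁰ K) =
        ((Ideal.span {x} : Ideal D) : FractionalIdeal D⁰ K)

/-- `D` has finite `*`-character: every nonzero nonunit lies in only finitely many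
maximal `*`-ideals. -/
def FiniteStarCharacter : Prop :=
  ∀ x : D, x ≠ 0 → ¬IsUnit x → {P : Ideal D | s.IsMaxStarIdeal P ∧ x ∈ P}.Finite

end StarOperation

namespace StarOperation

section helpers

variable {D K : Type*} [CommRing D] [IsDomain D] [Field K] [Algebra D K] [IsFractionRing D K]
variable (s : StarOperation D K)

/-- The star closure as an integral ideal. -/
noncomputable def cl (A : Ideal D) : Ideal D :=
  Submodule.comap (Algebra.linearMap D K)
    ((s.star (A : FractionalIdeal D⁰ K) : FractionalIdeal D⁰ K) : Submodule D K)

theorem mem_cl {A : Ideal D} {x : D} :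
    x ∈ s.cl A ↔ algebraMap D K x ∈ s.star (A : FractionalIdeal D⁰ K) := Iff.rfl

theorem coe_ne {A : Ideal D} (h : A ≠ ⊥) : (A : FractionalIdeal D⁰ K) ≠ 0 :=
  FractionalIdeal.coeIdeal_ne_zero.mpr h

theorem star_one' : s.star 1 = 1 := by
  have := s.star_spanSingleton 1 one_ne_zero
  simpa using this

theorem coe_cl {A : Ideal D} (h : A ≠ ⊥) :
    (s.cl A : FractionalIdeal D⁰ K) = s.star (A : FractionalIdeal D⁰ K) := by
  have h1 : s.star (A : FractionalIdeal D⁰ K) ≤ 1 := by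
    rw [← s.star_one']
    exact s.star_mono _ _ (coe_ne h) one_ne_zero FractionalIdeal.coeIdeal_le_one
  ext x
  rw [FractionalIdeal.mem_coeIdeal]
  constructor
  · rintro ⟨y, hy, rfl⟩
    exact hy
  · intro hx
    obtain ⟨y, rfl⟩ := (FractionalIdeal.mem_one_iff D⁰).mp (h1 hx)
    exact ⟨y, hx, rfl⟩

theorem le_cl {A : Ideal D} (h : A ≠ ⊥) : A ≤ s.cl A := by
  rw [← FractionalIdeal.coeIdeal_le_coeIdeal K, s.coe_cl h]
  exact s.le_star _ (coe_ne h)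

theorem ne_bot_mono {A B : Ideal D} (h : A ≠ ⊥) (hAB : A ≤ B) : B ≠ ⊥ :=
  ne_bot_of_le_ne_bot h hAB

theorem cl_ne {A : Ideal D} (h : A ≠ ⊥) : s.cl A ≠ ⊥ := ne_bot_mono h (s.le_cl h)

theorem cl_mono {A B : Ideal D} (h : A ≠ ⊥) (hAB : A ≤ B) : s.cl A ≤ s.cl B := by
  have hB := ne_bot_mono h hAB
  rw [← FractionalIdeal.coeIdeal_le_coeIdeal K, s.coe_cl h, s.coe_cl hB]
  exact s.star_mono _ _ (coe_ne h) (coe_ne hB)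
    ((FractionalIdeal.coeIdeal_le_coeIdeal K).mpr hAB)

theorem cl_cl {A : Ideal D} (h : A ≠ ⊥) : s.cl (s.cl A) = s.cl A := by
  apply FractionalIdeal.coeIdeal_injective (K := K)
  simp only
  rw [s.coe_cl (s.cl_ne h), s.coe_cl h, s.star_idem _ (coe_ne h)]

theorem cl_le {A B : Ideal D} (h : A ≠ ⊥) (hB : B ≠ ⊥) (hAB : A ≤ s.cl B) :
    s.cl A ≤ s.cl B := by
  rw [← s.cl_cl hB]
  exact s.cl_mono h hAB

theorem star_eq_one_iff {A : Ideal D} (h : A ≠ ⊥) :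
    s.star (A : FractionalIdeal D⁰ K) = 1 ↔ s.cl A = ⊤ := by
  rw [← s.coe_cl h, FractionalIdeal.coeIdeal_eq_one, Ideal.one_eq_top]

theorem cl_mul_le {A B : Ideal D} (hA : A ≠ ⊥) (hB : B ≠ ⊥) : s.cl A * B ≤ s.cl (A * B) := by
  rw [Ideal.mul_le]
  intro x hx b hb
  by_cases hb0 : b = 0
  · simp [hb0]
  have hb0' : algebraMap D K b ≠ 0 := by simpa using hb0
  have hS : Ideal.span {b} * A ≠ ⊥ := by
    simpa [Ideal.mul_eq_bot, hb0] using hA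
  have hle : Ideal.span {b} * A ≤ A * B := by
    rw [mul_comm A B]
    exact Ideal.mul_mono_left ((Ideal.span_singleton_le_iff_mem B).mpr hb)
  apply s.cl_mono hS hle
  rw [mem_cl, FractionalIdeal.coeIdeal_mul, FractionalIdeal.coeIdeal_span_singleton,
    s.star_smul _ _ hb0' (coe_ne hA), map_mul, mul_comm (algebraMap D K x)]
  exact FractionalIdeal.mul_mem_mul (FractionalIdeal.mem_spanSingleton_self _ _) hx

theorem mul_ne {A B : Ideal D} (hA : A ≠ ⊥) (hB : B ≠ ⊥) : A * B ≠ ⊥ := by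
  simp [Ideal.mul_eq_bot, hA, hB]

theorem sup_ne {A B : Ideal D} (hB : B ≠ ⊥) : A + B ≠ ⊥ :=
  ne_bot_mono hB le_sup_right

theorem cl_mul_cl_le {A B : Ideal D} (hA : A ≠ ⊥) (hB : B ≠ ⊥) :
    s.cl A * s.cl B ≤ s.cl (A * B) := by
  refine (s.cl_mul_le hA (s.cl_ne hB)).trans ?_
  refine s.cl_le (mul_ne hA (s.cl_ne hB)) (mul_ne hA hB) ?_
  rw [mul_comm A, mul_comm A]
  exact s.cl_mul_le hB hA

theorem comax_mul {A B C : Ideal D} (hB : B ≠ ⊥) (hC : C ≠ ⊥)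
    (h1 : s.cl (A + B) = ⊤) (h2 : s.cl (A + C) = ⊤) : s.cl (A + B * C) = ⊤ := by
  have h := s.cl_mul_cl_le (sup_ne (A := A) hB) (sup_ne (A := A) hC)
  rw [h1, h2, Ideal.top_mul, top_le_iff] at h
  rw [← top_le_iff, ← h]
  apply s.cl_mono (mul_ne (sup_ne hB) (sup_ne hC))
  rw [Ideal.mul_le]
  intro x hx y hy
  obtain ⟨a, ha, b, hb, rfl⟩ := Submodule.mem_sup.mp hx
  obtain ⟨a', ha', c, hc, rfl⟩ := Submodule.mem_sup.mp hy
  refine Submodule.mem_sup.mpr ⟨a * (a' + c) + b * a', ?_, b * c, Ideal.mul_mem_mul hb hc, by ring⟩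
  exact A.add_mem (A.mul_mem_right _ ha) (A.mul_mem_left _ ha')

theorem isStarIdeal_iff {A : Ideal D} : s.IsStarIdeal A ↔ A ≠ ⊥ ∧ s.cl A = A := by
  unfold IsStarIdeal
  refine and_congr_right fun h => ?_
  rw [← s.coe_cl h, FractionalIdeal.coeIdeal_inj]

theorem isFiniteType_iff {A : Ideal D} :
    s.IsFiniteTypeStarIdeal A ↔ ∃ F : Ideal D, F ≠ ⊥ ∧ F.FG ∧ s.cl F = A := by
  unfold IsFiniteTypeStarIdeal
  refine exists_congr fun F => and_congr_right fun h => ?_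
  rw [← s.coe_cl h, FractionalIdeal.coeIdeal_inj]

theorem mem_MSet {I : Ideal D} (h : I ≠ ⊥) {x : D} :
    x ∈ s.MSet I ↔ s.cl (Ideal.span {x} + I) ≠ ⊤ := by
  unfold MSet
  rw [Set.mem_ofPred_eq, Ne, s.star_eq_one_iff (sup_ne h)]

theorem cl_add_cl {A B : Ideal D} (hA : A ≠ ⊥) (hB : B ≠ ⊥) :
    s.cl (s.cl A + s.cl B) = s.cl (A + B) := by
  apply le_antisymm
  · refine s.cl_le (sup_ne (s.cl_ne hB)) (sup_ne hB) (sup_le ?_ ?_)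
    · exact s.cl_mono hA le_sup_left
    · exact s.cl_mono hB le_sup_right
  · exact s.cl_mono (sup_ne hB) (sup_le_sup (s.le_cl hA) (s.le_cl hB))

/-- Homogeneity, applied to `cl (F + I)` and `cl (G + I)`. -/
theorem homog_add {I : Ideal D} (hI : s.IsHomog I) {F G : Ideal D} (hF : F.FG) (hG : G.FG)
    (h1 : s.cl (F + I) ≠ ⊤) (h2 : s.cl (G + I) ≠ ⊤) : s.cl ((F + G) + I) ≠ ⊤ := by
  obtain ⟨-, hst, hft, hh⟩ := hI
  obtain ⟨hI0, hIc⟩ := s.isStarIdeal_iff.mp hst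
  obtain ⟨E, hE0, hE, rfl⟩ := s.isFiniteType_iff.mp hft
  have key : ∀ F : Ideal D, F.FG → s.IsStarIdeal (s.cl (F + s.cl E)) ∧
      s.IsFiniteTypeStarIdeal (s.cl (F + s.cl E)) ∧ s.cl E ≤ s.cl (F + s.cl E) := by
    intro F hF
    refine ⟨s.isStarIdeal_iff.mpr ⟨s.cl_ne (sup_ne hI0), s.cl_cl (sup_ne hI0)⟩,
      s.isFiniteType_iff.mpr ⟨F + E, sup_ne hE0, Submodule.FG.sup hF hE, ?_⟩,
      le_sup_right.trans (s.le_cl (sup_ne hI0))⟩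
    apply le_antisymm
    · exact s.cl_mono (sup_ne hE0) (sup_le_sup le_rfl (s.le_cl hE0))
    · refine s.cl_le (sup_ne hI0) (sup_ne hE0) (sup_le ?_ ?_)
      · exact le_sup_left.trans (s.le_cl (sup_ne hE0))
      · exact s.cl_mono hE0 le_sup_right
  obtain ⟨a1, a2, a3⟩ := key F hF
  obtain ⟨b1, b2, b3⟩ := key G hG
  have := hh _ _ h1 h2 a1 b1 a2 b2 a3 b3
  rw [Ne, s.star_eq_one_iff (sup_ne b1.1), s.cl_add_cl (sup_ne hI0) (sup_ne hI0)] at this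
  have e : F + s.cl E + (G + s.cl E) = F + G + s.cl E := by
    change (F ⊔ _) ⊔ (G ⊔ _) = (F ⊔ G) ⊔ _
    rw [sup_sup_sup_comm, sup_idem]
  rwa [e] at this

theorem fg_sub_MSet {I : Ideal D} (hI : s.IsHomog I) (F : Ideal D) (hF : F.FG)
    (h : (F : Set D) ⊆ s.MSet I) : s.cl (F + I) ≠ ⊤ := by
  have hI0 := hI.2.1.1
  have : F.FG ∧ ((F : Set D) ⊆ s.MSet I → s.cl (F + I) ≠ ⊤) := by
    refine Submodule.fg_induction
      (motive := fun F _ => Submodule.FG F ∧ ((F : Set D) ⊆ s.MSet I → s.cl (F + I) ≠ ⊤)) ?_ ?_ F hF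
    · intro x
      refine ⟨Submodule.fg_span_singleton x, fun hx => ?_⟩
      exact (s.mem_MSet hI0).mp (hx (Submodule.mem_span_singleton_self x))
    · rintro A B - - ⟨hA, hA'⟩ ⟨hB, hB'⟩
      refine ⟨hA.sup hB, fun hx => ?_⟩
      exact s.homog_add hI hA hB (hA' fun a ha => hx (Submodule.mem_sup_left ha))
        (hB' fun a ha => hx (Submodule.mem_sup_right ha))
  exact this.2 h

/-- properness of `A + I` transfers between similar homogeneous ideals -/
theorem transfer {I J : Ideal D} (hI : s.IsHomog I) (hJ : s.IsHomog J)
    (hsim : s.MSet I = s.MSet J) {F : Ideal D} (hF : F.FG) (h : s.cl (F + I) ≠ ⊤) :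
    s.cl (F + J) ≠ ⊤ := by
  apply s.fg_sub_MSet hJ F hF
  rw [← hsim]
  intro x hx
  rw [SetLike.mem_coe] at hx
  rw [s.mem_MSet hI.2.1.1]
  intro ht
  apply h
  rw [← top_le_iff, ← ht]
  exact s.cl_mono (sup_ne hI.2.1.1)
    (sup_le_sup ((Ideal.span_singleton_le_iff_mem F).mpr hx) le_rfl)

end helpers

end StarOperation

/-- If `I` and `J` are similar `*`-homogeneous ideals (`M(I) = M(J)`), then
`(IJ)^*` is a `*`-homogeneous ideal with `M((IJ)^*) = M(I) = M(J)`. -/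
theorem isHomog_star_mul {D K : Type*} [CommRing D] [IsDomain D] [Field K]
    [Algebra D K] [IsFractionRing D K] (s : StarOperation D K) (hs : s.FiniteCharacter)
    (I J : Ideal D) (hI : s.IsHomog I) (hJ : s.IsHomog J) (hsim : s.MSet I = s.MSet J) :
    ∃ L : Ideal D,
      (L : FractionalIdeal D⁰ K) = s.star ((I * J : Ideal D) : FractionalIdeal D⁰ K) ∧
      s.IsHomog L ∧ s.MSet L = s.MSet I ∧ s.MSet L = s.MSet J := by
  obtain ⟨hI0, hIc⟩ := s.isStarIdeal_iff.mp hI.2.1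
  obtain ⟨hJ0, hJc⟩ := s.isStarIdeal_iff.mp hJ.2.1
  have hIJ := StarOperation.mul_ne hI0 hJ0
  have hLI : s.cl (I * J) ≤ I := by
    have := s.cl_mono hIJ (Ideal.mul_le_left : I * J ≤ I)
    rwa [hIc] at this
  have hL0 := s.cl_ne hIJ
  have hM : s.MSet (s.cl (I * J)) = s.MSet I := by
    ext x
    rw [s.mem_MSet hL0, s.mem_MSet hI0]
    refine not_congr ⟨fun h => ?_, fun h => ?_⟩
    · rw [← top_le_iff, ← h]
      exact s.cl_mono (StarOperation.sup_ne hL0) (sup_le_sup le_rfl hLI)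
    · have h' : s.cl (Ideal.span {x} + J) = ⊤ := by
        by_contra hc
        exact (s.mem_MSet hI0).mp (hsim ▸ (s.mem_MSet hJ0).mpr hc) h
      rw [← top_le_iff, ← s.comax_mul hI0 hJ0 h h']
      exact s.cl_mono (StarOperation.sup_ne hIJ) (sup_le_sup le_rfl (s.le_cl hIJ))
  refine ⟨s.cl (I * J), s.coe_cl hIJ, ⟨?_, ?_, ?_, ?_⟩, hM, hM.trans hsim⟩
  · intro h
    rw [h, top_le_iff] at hLI
    exact hI.1 hLI
  · exact s.isStarIdeal_iff.mpr ⟨hL0, s.cl_cl hIJ⟩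
  · obtain ⟨F, hF0, hF, hFI⟩ := s.isFiniteType_iff.mp hI.2.2.1
    obtain ⟨G, hG0, hG, hGJ⟩ := s.isFiniteType_iff.mp hJ.2.2.1
    have hFG := StarOperation.mul_ne hF0 hG0
    refine s.isFiniteType_iff.mpr ⟨F * G, hFG, Submodule.FG.mul hF hG, ?_⟩
    apply le_antisymm
    · exact s.cl_mono hFG (Ideal.mul_mono (hFI ▸ s.le_cl hF0) (hGJ ▸ s.le_cl hG0))
    · refine s.cl_le hIJ hFG ?_
      have := s.cl_mul_cl_le hF0 hG0
      rwa [hFI, hGJ] at this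
  · intro A B hA hB _ _ hAf hBf hLA hLB
    obtain ⟨F, hF0, hF, rfl⟩ := s.isFiniteType_iff.mp hAf
    obtain ⟨G, hG0, hG, rfl⟩ := s.isFiniteType_iff.mp hBf
    have key : ∀ F : Ideal D, F ≠ ⊥ → F.FG → s.cl F ≠ ⊤ → s.cl (I * J) ≤ s.cl F →
        s.cl (F + I) ≠ ⊤ := by
      intro F hF0 hF hp hle h
      have h' : s.cl (F + J) = ⊤ := by
        by_contra hc
        exact s.transfer hJ hI hsim.symm hF hc h
      apply hp
      rw [← top_le_iff, ← s.comax_mul hI0 hJ0 h h']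
      exact s.cl_le (StarOperation.sup_ne hIJ) hF0
        (sup_le (s.le_cl hF0) ((s.le_cl hIJ).trans hle))
    have := s.homog_add hI hF hG (key F hF0 hF hA hLA) (key G hG0 hG hB hLB)
    rw [Ne, s.star_eq_one_iff (StarOperation.sup_ne (s.cl_ne hG0)), s.cl_add_cl hF0 hG0]
    intro h
    apply this
    rw [← top_le_iff, ← h]
    exact s.cl_mono (StarOperation.sup_ne hG0) le_sup_left
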